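/- arXiv:1702.03981 — 2 statements merged into one kernel-verified Lean document; each statement's English description precedes it below -/
import Mathlib

section
/- Soundness of Cyclic Proof Systems: Let a cyclic entailment system be given together with an ordinal trace function 𝒪 satisfying the descending counter-model property. If P is a valid cyclic proof of a sequent S — i.e. a pre-proof in which every infinite path has a tail followed by an infinitely progressing left-hand trace — then S is valid (every model m with m ⊨_𝒜 A also satisfies m ⊨_𝒞 C, where S = A ⊢ C). -/
noncomputable section

/-- We work with ordinals in universe 0. -/
abbrev Ordl : Type 1 := Ordinal.{0}

/-- Reverse ordinal sum: `revSum d k = d (k-1) + ⋯ + d 0` (and `0` for `k = 0`). -/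
def revSum (d : ℕ → Ordl) : ℕ → Ordl
  | 0 => 0
  | k + 1 => d k + revSum d k

/-- An abstract entailment system: antecedents, consequents, models, the two
satisfaction relations, and finite sets of trace values for antecedents and
consequents (drawn from the disjoint types `TA` and `TC`). -/
structure CES where
  A : Type
  C : Type
  M : Type
  TA : Type
  TC : Type
  satA : M → A → Prop
  satC : M → C → Prop
  tvA : A → Finset TA
  tvC : C → Finset TC

/-- Validity of a sequent `A ⊢ C`: every model of the antecedent satisfies the consequent. -/
def CES.Valid (S : CES) (s : S.A × S.C) : Prop :=
  ∀ m : S.M, S.satA m s.1 → S.satC m s.2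

/-- A cyclic pre-proof: a finite directed graph whose nodes carry sequents and
(ordered) lists of children, together with the trace pair functions `δ1` (on
antecedent trace values) and `δ2` (on consequent trace values) attached to the
rule instance at each node/premise.  `δ1`/`δ2` are partial (Option-valued) and
only defined along edges, on trace values of the respective sequents. -/
structure PreProof (S : CES) where
  Node : Type
  [fintypeNode : Fintype Node]
  [decEqNode : DecidableEq Node]
  seqOf : Node → S.A × S.C
  children : Node → List Node
  δ1 : Node → Node → S.TA → S.TA → Option Ordl
  δ2 : Node → Node → S.TC → S.TC → Option Ordl
  δ1_dom : ∀ ν ν' τ τ', (δ1 ν ν' τ τ').isSome →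
    ν' ∈ children ν ∧ τ ∈ S.tvA (seqOf ν).1 ∧ τ' ∈ S.tvA (seqOf ν').1
  δ2_dom : ∀ ν ν' τ τ', (δ2 ν ν' τ τ').isSome →
    ν' ∈ children ν ∧ τ ∈ S.tvC (seqOf ν).2 ∧ τ' ∈ S.tvC (seqOf ν').2

attribute [instance] PreProof.fintypeNode PreProof.decEqNode

/-- An ordinal trace function: partial ordinal-valued functions on
(antecedent resp. consequent) trace value/model pairs, defined at least on all
`(τ, m)` with `τ ∈ tvA A` and `m ⊨ A`. -/
structure OTF (S : CES) where
  OA : S.TA → S.M → Option Ordl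
  OC : S.TC → S.M → Option Ordl
  definedA : ∀ (a : S.A) (τ : S.TA) (m : S.M),
    τ ∈ S.tvA a → S.satA m a → (OA τ m).isSome

/-- `1̲`: the least value taken by the ordinal trace function. -/
def OTF.leastVal {S : CES} (O : OTF S) : Ordl :=
  sInf {o : Ordl | (∃ τ m, O.OA τ m = some o) ∨ (∃ τ m, O.OC τ m = some o)}

/-- A sequent `s` equates trace values `τa` and `τc`: whenever `s` is valid,
every model of the antecedent realizing `τc` realizes `τa` with the same size. -/
def OTF.Equates {S : CES} (O : OTF S) (s : S.A × S.C) (τa : S.TA) (τc : S.TC) : Prop :=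
  S.Valid s → ∀ m : S.M, S.satA m s.1 →
    ∀ o : Ordl, O.OC τc m = some o → O.OA τa m = some o

namespace PreProof

variable {S : CES}

/-- A node is axiomatic when its rule instance has no premises. -/
def Axiomatic (P : PreProof S) (ν : P.Node) : Prop := P.children ν = []

/-- `νs 0, …, νs (n-1)` is a (finite) path in the pre-proof. -/
def IsPath (P : PreProof S) (n : ℕ) (νs : ℕ → P.Node) : Prop :=
  ∀ i, i + 1 < n → νs (i + 1) ∈ P.children (νs i)

/-- An infinite path in the pre-proof. -/
def InfPath (P : PreProof S) (νs : ℕ → P.Node) : Prop :=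
  ∀ i, νs (i + 1) ∈ P.children (νs i)

/-- A left-hand trace `τs 0, …, τs (k-1)` follows (an initial segment of) the
path `νs 0, …, νs (n-1)`. -/
def FollowsL (P : PreProof S) (n : ℕ) (νs : ℕ → P.Node) (k : ℕ) (τs : ℕ → S.TA) : Prop :=
  k ≤ n ∧ (∀ i < k, τs i ∈ S.tvA (P.seqOf (νs i)).1) ∧
    ∀ i, i + 1 < k → (P.δ1 (νs i) (νs (i + 1)) (τs i) (τs (i + 1))).isSome

/-- A right-hand trace `τs 0, …, τs (k-1)` follows (an initial segment of) the
path `νs 0, …, νs (n-1)`. -/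
def FollowsR (P : PreProof S) (n : ℕ) (νs : ℕ → P.Node) (k : ℕ) (τs : ℕ → S.TC) : Prop :=
  k ≤ n ∧ (∀ i < k, τs i ∈ S.tvC (P.seqOf (νs i)).2) ∧
    ∀ i, i + 1 < k → (P.δ2 (νs i) (νs (i + 1)) (τs i) (τs (i + 1))).isSome

/-- The `δ1`-value of the `i`-th step of a left-hand trace along a path. -/
def stepL (P : PreProof S) (νs : ℕ → P.Node) (τs : ℕ → S.TA) (i : ℕ) : Ordl :=
  (P.δ1 (νs i) (νs (i + 1)) (τs i) (τs (i + 1))).getD 0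

/-- The `δ2`-value of the `i`-th step of a right-hand trace along a path. -/
def stepR (P : PreProof S) (νs : ℕ → P.Node) (τs : ℕ → S.TC) (i : ℕ) : Ordl :=
  (P.δ2 (νs i) (νs (i + 1)) (τs i) (τs (i + 1))).getD 0

/-- Size `Θ` of a left-hand trace of length `k` along a path: the *reverse*
ordinal sum `δ1(τ_{k-2},τ_{k-1}) + ⋯ + δ1(τ_0,τ_1)`. -/
def thetaL (P : PreProof S) (νs : ℕ → P.Node) (τs : ℕ → S.TA) (k : ℕ) : Ordl :=
  revSum (P.stepL νs τs) (k - 1)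

/-- Size `Θ` of a right-hand trace of length `k` along a path (reverse sum). -/
def thetaR (P : PreProof S) (νs : ℕ → P.Node) (τs : ℕ → S.TC) (k : ℕ) : Ordl :=
  revSum (P.stepR νs τs) (k - 1)

/-- The global soundness condition: every infinite path has a tail followed by
an infinitely progressing left-hand trace. -/
def GlobalSound (P : PreProof S) : Prop :=
  ∀ νs : ℕ → P.Node, P.InfPath νs →
    ∃ (k : ℕ) (τs : ℕ → S.TA),
      (∀ i, (P.δ1 (νs (k + i)) (νs (k + i + 1)) (τs i) (τs (i + 1))).isSome) ∧
      ∀ N, ∃ i, N ≤ i ∧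
        ∃ α : Ordl, P.δ1 (νs (k + i)) (νs (k + i + 1)) (τs i) (τs (i + 1)) = some α ∧ 0 < α

/-- A (valid) cyclic proof: a pre-proof satisfying the global soundness
condition; consequently (and we record it as part of the notion) all sequents
occurring in it are valid. -/
def IsCyclicProof (P : PreProof S) : Prop :=
  P.GlobalSound ∧ ∀ ν : P.Node, S.Valid (P.seqOf ν)

/-- The descending counter-model property of an ordinal trace function. -/
def DCM (P : PreProof S) (O : OTF S) : Prop :=
  ∀ (ν : P.Node) (m : S.M),
    S.satA m (P.seqOf ν).1 → ¬ S.satC m (P.seqOf ν).2 →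
    ∃ ν' ∈ P.children ν, ∃ m' : S.M,
      S.satA m' (P.seqOf ν').1 ∧ ¬ S.satC m' (P.seqOf ν').2 ∧
      ∀ (τ τ' : S.TA) (α : Ordl), P.δ1 ν ν' τ τ' = some α →
        ∀ o : Ordl, O.OA τ m = some o →
          ∃ o' : Ordl, O.OA τ' m' = some o' ∧ o' + α ≤ o

/-- A right-hand trace value is terminal for a node when it has no successor
trace value towards any premise. -/
def TerminalR (P : PreProof S) (ν : P.Node) (σ : S.TC) : Prop :=
  ∀ ν' ∈ P.children ν, ∀ σ', P.δ2 ν ν' σ σ' = none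

/-- Defining property of the exclusion predicate: a rule instance (node)
excludes a consequent trace value only if no model of the antecedent realizes
it. -/
def ExclOK (P : PreProof S) (O : OTF S) (Excl : P.Node → S.TC → Prop) : Prop :=
  ∀ (ν : P.Node) (σ : S.TC), Excl ν σ →
    ∀ m : S.M, S.satA m (P.seqOf ν).1 → O.OC σ m = none

/-- A consequent trace value is ground w.r.t. a node: if the node's sequent is
valid then the value is realized only with the least possible size. -/
def Ground (P : PreProof S) (O : OTF S) (ν : P.Node) (σ : S.TC) : Prop :=
  S.Valid (P.seqOf ν) → ∀ m : S.M, S.satA m (P.seqOf ν).1 →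
    ∀ o : Ordl, O.OC σ m = some o → o = O.leastVal

/-- The trace value ordering relation `τ2 ∼^ν_P τ1` (`∼` is `<` when
`strict = true` and `≤` otherwise). -/
def TVO (P : PreProof S) (O : OTF S) (Excl : P.Node → S.TC → Prop) (strict : Bool)
    (ν0 : P.Node) (τ1 : S.TA) (τ2 : S.TC) : Prop :=
  ∀ (n : ℕ) (νs : ℕ → P.Node) (τs : ℕ → S.TC),
    1 ≤ n → P.IsPath n νs → νs 0 = ν0 → τs 0 = τ2 →
    P.FollowsR n νs n τs →
    P.TerminalR (νs (n - 1)) (τs (n - 1)) →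
    ¬ Excl (νs (n - 1)) (τs (n - 1)) →
    ∃ (k : ℕ) (τs' : ℕ → S.TA),
      1 ≤ k ∧ k ≤ n ∧ τs' 0 = τ1 ∧ P.FollowsL n νs k τs' ∧
      (if strict then P.thetaR νs τs n < P.thetaL νs τs' k
        else P.thetaR νs τs n ≤ P.thetaL νs τs' k) ∧
      (P.Ground O (νs (n - 1)) (τs (n - 1)) ∨
        (P.Axiomatic (νs (n - 1)) ∧ k = n ∧
          O.Equates (P.seqOf (νs (n - 1))) (τs' (n - 1)) (τs (n - 1))))

/-- The descending model property of an ordinal trace function. -/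
def DMP (P : PreProof S) (O : OTF S) : Prop :=
  ∀ ν : P.Node, P.children ν ≠ [] →
    S.Valid (P.seqOf ν) → (∀ ν' ∈ P.children ν, S.Valid (P.seqOf ν')) →
    ∀ τ1 ∈ S.tvA (P.seqOf ν).1, ∀ τ2 ∈ S.tvC (P.seqOf ν).2,
    ∀ m : S.M, S.satA m (P.seqOf ν).1 →
    ∃ ν' ∈ P.children ν, ∃ m' : S.M,
      S.satA m' (P.seqOf ν').1 ∧
      (P.TerminalR ν τ2 ∨ ∃ σ', (P.δ2 ν ν' τ2 σ').isSome) ∧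
      (∀ (σ' : S.TA) (α : Ordl), P.δ1 ν ν' τ1 σ' = some α →
        ∀ o : Ordl, O.OA τ1 m = some o →
          ∃ o' : Ordl, O.OA σ' m' = some o' ∧ o' + α ≤ o) ∧
      (∀ (σ' : S.TC) (α : Ordl), P.δ2 ν ν' τ2 σ' = some α →
        ∀ o : Ordl, O.OC τ2 m = some o →
          ∃ o' : Ordl, O.OC σ' m' = some o' ∧ o ≤ o' + α)

/-- A sequence of models supports a left-hand trace along a path. -/
def SupportsL (P : PreProof S) (O : OTF S) (n : ℕ) (νs : ℕ → P.Node) (k : ℕ)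
    (τs : ℕ → S.TA) (ms : ℕ → S.M) : Prop :=
  P.FollowsL n νs k τs ∧
    (∀ i < k, S.satA (ms i) (P.seqOf (νs i)).1 ∧ (O.OA (τs i) (ms i)).isSome) ∧
    ∀ j, j + 1 < k → ∀ o o' : Ordl, O.OA (τs j) (ms j) = some o →
      O.OA (τs (j + 1)) (ms (j + 1)) = some o' →
      o' + P.stepL νs τs j ≤ o

/-- A sequence of models supports a right-hand trace along a path. -/
def SupportsR (P : PreProof S) (O : OTF S) (n : ℕ) (νs : ℕ → P.Node) (k : ℕ)
    (τs : ℕ → S.TC) (ms : ℕ → S.M) : Prop :=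
  P.FollowsR n νs k τs ∧
    (∀ i < k, S.satC (ms i) (P.seqOf (νs i)).2 ∧ (O.OC (τs i) (ms i)).isSome) ∧
    ∀ j, j + 1 < k → ∀ o o' : Ordl, O.OC (τs j) (ms j) = some o →
      O.OC (τs (j + 1)) (ms (j + 1)) = some o' →
      o ≤ o' + P.stepR νs τs j

/-- `(ν', τ')` is reachable from `(ν, τ)` on the left. -/
def ReachL (P : PreProof S) (ν : P.Node) (τ : S.TA) (ν' : P.Node) (τ' : S.TA) : Prop :=
  ∃ (n : ℕ) (νs : ℕ → P.Node) (τs : ℕ → S.TA),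
    1 ≤ n ∧ P.IsPath n νs ∧ P.FollowsL n νs n τs ∧
    νs 0 = ν ∧ τs 0 = τ ∧ νs (n - 1) = ν' ∧ τs (n - 1) = τ'

/-- `(ν', τ')` is reachable from `(ν, τ)` on the right. -/
def ReachR (P : PreProof S) (ν : P.Node) (τ : S.TC) (ν' : P.Node) (τ' : S.TC) : Prop :=
  ∃ (n : ℕ) (νs : ℕ → P.Node) (τs : ℕ → S.TC),
    1 ≤ n ∧ P.IsPath n νs ∧ P.FollowsR n νs n τs ∧
    νs 0 = ν ∧ τs 0 = τ ∧ νs (n - 1) = ν' ∧ τs (n - 1) = τ'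

/-- A left cycle along a path. -/
def IsCycleL (P : PreProof S) (n : ℕ) (νs : ℕ → P.Node) (τs : ℕ → S.TA) : Prop :=
  2 ≤ n ∧ P.IsPath n νs ∧ P.FollowsL n νs n τs ∧ νs (n - 1) = νs 0 ∧ τs (n - 1) = τs 0

/-- A right cycle along a path. -/
def IsCycleR (P : PreProof S) (n : ℕ) (νs : ℕ → P.Node) (τs : ℕ → S.TC) : Prop :=
  2 ≤ n ∧ P.IsPath n νs ∧ P.FollowsR n νs n τs ∧ νs (n - 1) = νs 0 ∧ τs (n - 1) = τs 0

/-- A simple left cycle. -/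
def IsSimpleCycleL (P : PreProof S) (n : ℕ) (νs : ℕ → P.Node) (τs : ℕ → S.TA) : Prop :=
  P.IsCycleL n νs τs ∧
    ∀ i j, 1 ≤ i → i < j → j ≤ n - 1 → ¬ (νs i = νs j ∧ τs i = τs j)

/-- A simple right cycle. -/
def IsSimpleCycleR (P : PreProof S) (n : ℕ) (νs : ℕ → P.Node) (τs : ℕ → S.TC) : Prop :=
  P.IsCycleR n νs τs ∧
    ∀ i j, 1 ≤ i → i < j → j ≤ n - 1 → ¬ (νs i = νs j ∧ τs i = τs j)

/-- A simple left binary cycle. -/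
def IsSimpleBinCycleL (P : PreProof S) (n : ℕ) (νs : ℕ → P.Node)
    (τs τs' : ℕ → S.TA) : Prop :=
  P.IsCycleL n νs τs ∧ P.IsCycleL n νs τs' ∧
    ∀ i j, 1 ≤ i → i < j → j ≤ n - 1 →
      ¬ (νs i = νs j ∧ τs i = τs j ∧ τs' i = τs' j)

/-- `P` is left finitely progressing w.r.t. `(ν0, τ0)`. -/
def FinProgL (P : PreProof S) (ν0 : P.Node) (τ0 : S.TA) : Prop :=
  ∀ (ν1 ν2 : P.Node) (τ1 τ2 : S.TA) (α : Ordl),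
    P.ReachL ν0 τ0 ν1 τ1 → P.δ1 ν1 ν2 τ1 τ2 = some α → α < Ordinal.omega0

/-- `P` is right finitely progressing w.r.t. `(ν0, τ0)`. -/
def FinProgR (P : PreProof S) (ν0 : P.Node) (τ0 : S.TC) : Prop :=
  ∀ (ν1 ν2 : P.Node) (τ1 τ2 : S.TC) (α : Ordl),
    P.ReachR ν0 τ0 ν1 τ1 → P.δ2 ν1 ν2 τ1 τ2 = some α → α < Ordinal.omega0

/-- `P` is dynamic w.r.t. `ν0`, `τA`, `τC`: every reachable left or right
simple cycle has strictly positive size. -/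
def Dynamic (P : PreProof S) (ν0 : P.Node) (τA : S.TA) (τC : S.TC) : Prop :=
  (∀ (n : ℕ) (νs : ℕ → P.Node) (τs : ℕ → S.TA), P.IsSimpleCycleL n νs τs →
    P.ReachL ν0 τA (νs 0) (τs 0) → 0 < P.thetaL νs τs n) ∧
  (∀ (n : ℕ) (νs : ℕ → P.Node) (τs : ℕ → S.TC), P.IsSimpleCycleR n νs τs →
    P.ReachR ν0 τC (νs 0) (τs 0) → 0 < P.thetaR νs τs n)

/-- `P` is balanced w.r.t. `(ν0, τA)`: the two components of every reachable
simple left binary cycle have equal size. -/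
def Balanced (P : PreProof S) (ν0 : P.Node) (τA : S.TA) : Prop :=
  ∀ (n : ℕ) (νs : ℕ → P.Node) (τs τs' : ℕ → S.TA), P.IsSimpleBinCycleL n νs τs τs' →
    P.ReachL ν0 τA (νs 0) (τs 0) → P.ReachL ν0 τA (νs 0) (τs' 0) →
    P.thetaL νs τs n = P.thetaL νs τs' n

/-- The trace width `W(P)`. -/
def traceWidth (P : PreProof S) : ℕ :=
  Finset.univ.sup fun ν : P.Node =>
    max (S.tvA (P.seqOf ν).1).card (S.tvC (P.seqOf ν).2).card

/-- The (binary left-hand) cycle threshold `C(P)`: the number of triples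
`(σ, σ', μ)` with `σ, σ' ∈ TraceVals_A(μ)`. -/
def cycThreshold (P : PreProof S) : ℕ :=
  ∑ ν : P.Node, (S.tvA (P.seqOf ν).1).card * (S.tvA (P.seqOf ν).1).card

/-- `maxStep(P)`: the maximum (finite) `δ1`-value over the edges of `P`. -/
def maxStepN (P : PreProof S) : ℕ :=
  sSup {k : ℕ | ∃ ν ν' τ τ', P.δ1 ν ν' τ τ' = some (k : Ordl)}

/-- The in-degree of the proof graph. -/
def inDeg (P : PreProof S) : ℕ :=
  Finset.univ.sup fun ν' : P.Node =>
    (Finset.univ.filter fun ν : P.Node => ν' ∈ P.children ν).card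

/-- The trace pair function of `P` is trace injective. -/
def TraceInjective (P : PreProof S) : Prop :=
  (∀ (ν ν' : P.Node) (τ τ' τ'' : S.TA),
    (P.δ1 ν ν' τ τ'').isSome → (P.δ1 ν ν' τ' τ'').isSome → τ = τ') ∧
  (∀ (ν ν' : P.Node) (σ σ' σ'' : S.TC),
    (P.δ2 ν ν' σ σ'').isSome → (P.δ2 ν ν' σ' σ'').isSome → σ = σ')

/-- `T_ν(σ)`: the set of antecedent trace values of `ν` equated to `σ`
by the sequent of `ν`. -/
def Tset (P : PreProof S) (O : OTF S) (ν : P.Node) (σ : S.TC) : Set S.TA :=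
  {τ : S.TA | τ ∈ S.tvA (P.seqOf ν).1 ∧ O.Equates (P.seqOf ν) τ σ}

end PreProof

/-! ### Weighted automata over the ordinal max-plus semiring -/

/-- The alphabet `Σ_P`. -/
abbrev Sig {S : CES} (P : PreProof S) : Type := P.Node ⊕ (Set S.TA × S.TC)

/-- States of the antecedent automata (`⊤ⁱ_μ` states are used only by the
approximate automata). -/
inductive AState (Node TA : Type) : Type
  | init : AState Node TA
  | pair : Node → TA → AState Node TA
  | bot : AState Node TA
  | top : AState Node TA
  | topn : Node → ℕ → AState Node TA

instance {Node TA : Type} : Inhabited (AState Node TA) := ⟨AState.init⟩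

/-- States of the consequent automaton. -/
inductive BState (Node TC : Type) : Type
  | init : BState Node TC
  | pair : Node → TC → BState Node TC
  | bot : BState Node TC

instance {Node TC : Type} : Inhabited (BState Node TC) := ⟨BState.init⟩

/-- Transition relation of the (full) antecedent automaton `𝒜^{(P,ν0)}_{(τ1,·)}`. -/
inductive ATrans {S : CES} (P : PreProof S) (O : OTF S) (ν0 : P.Node) (τ1 : S.TA) :
    AState P.Node S.TA → Sig P → AState P.Node S.TA → Prop
  | start : ATrans P O ν0 τ1 .init (Sum.inl ν0) (.pair ν0 τ1)
  | step {μ μ' : P.Node} {σ σ' : S.TA} (h1 : μ' ∈ P.children μ)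
      (h2 : (P.δ1 μ μ' σ σ').isSome) :
      ATrans P O ν0 τ1 (.pair μ σ) (Sum.inl μ') (.pair μ' σ')
  | toBot {μ : P.Node} {σ : S.TA} {σ' : S.TC} (h1 : P.Axiomatic μ)
      (h2 : σ' ∈ S.tvC (P.seqOf μ).2) (h3 : σ ∈ P.Tset O μ σ') :
      ATrans P O ν0 τ1 (.pair μ σ) (Sum.inr (P.Tset O μ σ', σ')) .bot
  | toTop {μ μ' : P.Node} {σ : S.TA} (h : μ' ∈ P.children μ) :
      ATrans P O ν0 τ1 (.pair μ σ) (Sum.inl μ') .top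
  | topLoop (μ : P.Node) : ATrans P O ν0 τ1 .top (Sum.inl μ) .top

/-- Transition relation of the approximate antecedent automaton `𝒜(n)^{(P,ν0)}_{(τ1,·)}`. -/
inductive ATransN {S : CES} (P : PreProof S) (O : OTF S) (n : ℕ) (ν0 : P.Node) (τ1 : S.TA) :
    AState P.Node S.TA → Sig P → AState P.Node S.TA → Prop
  | start : ATransN P O n ν0 τ1 .init (Sum.inl ν0) (.pair ν0 τ1)
  | step {μ μ' : P.Node} {σ σ' : S.TA} (h1 : μ' ∈ P.children μ)
      (h2 : (P.δ1 μ μ' σ σ').isSome) :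
      ATransN P O n ν0 τ1 (.pair μ σ) (Sum.inl μ') (.pair μ' σ')
  | toBot {μ : P.Node} {σ : S.TA} {σ' : S.TC} (h1 : P.Axiomatic μ)
      (h2 : σ' ∈ S.tvC (P.seqOf μ).2) (h3 : σ ∈ P.Tset O μ σ') :
      ATransN P O n ν0 τ1 (.pair μ σ) (Sum.inr (P.Tset O μ σ', σ')) .bot
  | toTopn {μ μ' : P.Node} {σ : S.TA} (h : μ' ∈ P.children μ) :
      ATransN P O n ν0 τ1 (.pair μ σ) (Sum.inl μ') (.topn μ' 1)
  | topnStay {μ μ' : P.Node} {i : ℕ} (h1 : 0 < i) (h2 : i ≤ n) (h3 : μ' ≠ μ) :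
      ATransN P O n ν0 τ1 (.topn μ i) (Sum.inl μ') (.topn μ i)
  | topnStep {μ : P.Node} {i : ℕ} (h1 : 0 < i) (h2 : i < n) :
      ATransN P O n ν0 τ1 (.topn μ i) (Sum.inl μ) (.topn μ (i + 1))

/-- Transition relation of the consequent automaton `ℬ^{(P,ν0)}_{(·,τ2)}`. -/
inductive BTrans {S : CES} (P : PreProof S) (O : OTF S) (Excl : P.Node → S.TC → Prop)
    (ν0 : P.Node) (τ2 : S.TC) :
    BState P.Node S.TC → Sig P → BState P.Node S.TC → Prop
  | start : BTrans P O Excl ν0 τ2 .init (Sum.inl ν0) (.pair ν0 τ2)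
  | step {μ μ' : P.Node} {σ σ' : S.TC} (h1 : μ' ∈ P.children μ)
      (h2 : (P.δ2 μ μ' σ σ').isSome) :
      BTrans P O Excl ν0 τ2 (.pair μ σ) (Sum.inl μ') (.pair μ' σ')
  | toBot {μ : P.Node} {σ : S.TC} (h1 : P.Axiomatic μ) (h2 : σ ∈ S.tvC (P.seqOf μ).2)
      (h3 : ¬ P.Ground O μ σ) (h4 : ¬ Excl μ σ) :
      BTrans P O Excl ν0 τ2 (.pair μ σ) (Sum.inr (P.Tset O μ σ, σ)) .bot

/-- Weight function of the antecedent automata (the only potentially non-zero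
weights sit on pair-to-pair transitions, where they are given by `δ1`). -/
def Awt {S : CES} (P : PreProof S) :
    AState P.Node S.TA → Sig P → AState P.Node S.TA → Ordl
  | .pair μ σ, _, .pair μ' σ' => (P.δ1 μ μ' σ σ').getD 0
  | _, _, _ => 0

/-- Weight function of the consequent automaton. -/
def Bwt {S : CES} (P : PreProof S) :
    BState P.Node S.TC → Sig P → BState P.Node S.TC → Ordl
  | .pair μ σ, _, .pair μ' σ' => (P.δ2 μ μ' σ σ').getD 0
  | _, _, _ => 0

/-- `q` is a run over the word `σ 0, …, σ (m-1)` (from the initial state `q0`). -/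
def IsRun {Q A : Type*} (T : Q → A → Q → Prop) (q0 : Q) (m : ℕ) (σ : ℕ → A)
    (q : ℕ → Q) : Prop :=
  q 0 = q0 ∧ ∀ i < m, T (q i) (σ i) (q (i + 1))

/-- The value of a run: the `⊗`-product (i.e. reverse ordinal sum) of the
weights of its transitions. -/
def runVal {Q A : Type*} (wt : Q → A → Q → Ordl) (m : ℕ) (σ : ℕ → A) (q : ℕ → Q) : Ordl :=
  revSum (fun i => wt (q i) (σ i) (q (i + 1))) m

/-- The quantitative language of a weighted automaton: `⊥` (i.e. `none`) if the
word admits no accepting run, and otherwise the supremum (maximum) of the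
values of its accepting runs. -/
def Lang {Q A : Type*} (T : Q → A → Q → Prop) (q0 : Q) (F : Q → Prop)
    (wt : Q → A → Q → Ordl) (m : ℕ) (σ : ℕ → A) : Option Ordl := by
  classical
  exact if (∃ q : ℕ → Q, IsRun T q0 m σ q ∧ F (q m)) then
    some (sSup {v : Ordl | ∃ q : ℕ → Q, IsRun T q0 m σ q ∧ F (q m) ∧ v = runVal wt m σ q})
  else none

/-- Ordering of quantitative language values, with `⊥ = none` below everything. -/
def OptLE : Option Ordl → Option Ordl → Prop
  | none, _ => True
  | some _, none => False
  | some a, some b => a ≤ b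

/-- Strict ordering of quantitative language values on defined (non-`⊥`) values. -/
def OptLT : Option Ordl → Option Ordl → Prop
  | none, _ => True
  | some _, none => False
  | some a, some b => a < b

/-- `∼` on language values: `<` when `strict`, else `≤`. -/
def OptOrd (strict : Bool) : Option Ordl → Option Ordl → Prop :=
  fun x y => if strict then OptLT x y else OptLE x y

/-- Final states of the antecedent automata: all non-initial states. -/
def AFinal {Node TA : Type} : AState Node TA → Prop := fun q => q ≠ .init

/-- Final states of the consequent automaton. -/
def BFinal {S : CES} (P : PreProof S) (O : OTF S) (Excl : P.Node → S.TC → Prop) :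
    BState P.Node S.TC → Prop
  | .init => False
  | .bot => True
  | .pair μ σ => ¬ Excl μ σ ∧
      ((¬ P.Axiomatic μ ∧ P.TerminalR μ σ) ∨ (P.Axiomatic μ ∧ P.Ground O μ σ))

/-- The quantitative language of `𝒜^{(P,ν0)}_{(τ1,τ2)}` (it does not depend on `τ2`). -/
def LangA {S : CES} (P : PreProof S) (O : OTF S) (ν0 : P.Node) (τ1 : S.TA) :
    ℕ → (ℕ → Sig P) → Option Ordl :=
  Lang (ATrans P O ν0 τ1) .init AFinal (Awt P)

/-- The quantitative language of `𝒜(n)^{(P,ν0)}_{(τ1,τ2)}`. -/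
def LangAN {S : CES} (P : PreProof S) (O : OTF S) (n : ℕ) (ν0 : P.Node) (τ1 : S.TA) :
    ℕ → (ℕ → Sig P) → Option Ordl :=
  Lang (ATransN P O n ν0 τ1) .init AFinal (Awt P)

/-- The quantitative language of `ℬ^{(P,ν0)}_{(τ1,τ2)}` (it does not depend on `τ1`). -/
def LangB {S : CES} (P : PreProof S) (O : OTF S) (Excl : P.Node → S.TC → Prop)
    (ν0 : P.Node) (τ2 : S.TC) : ℕ → (ℕ → Sig P) → Option Ordl :=
  Lang (BTrans P O Excl ν0 τ2) .init (BFinal P O Excl) (Bwt P)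

/-- The automaton `ℬ^{(P,ν0)}_{(·,τ2)}` is grounded: every reachable final pair
state carries a trace value that is ground w.r.t. its node. -/
def BGrounded {S : CES} (P : PreProof S) (O : OTF S) (Excl : P.Node → S.TC → Prop)
    (ν0 : P.Node) (τ2 : S.TC) : Prop :=
  ∀ (μ : P.Node) (σ : S.TC),
    (∃ (m : ℕ) (w : ℕ → Sig P) (q : ℕ → BState P.Node S.TC),
      IsRun (BTrans P O Excl ν0 τ2) .init m w q ∧ q m = .pair μ σ ∧
        BFinal P O Excl (.pair μ σ)) →
    P.Ground O μ σ

/-- Collapse the graded sink states of an approximate automaton onto `⊤`. -/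
def collapseTop {Node TA : Type} : AState Node TA → AState Node TA
  | .topn _ _ => .top
  | q => q

/-- The number of occurrences of the letter `a` among `σ lo, …, σ (hi - 1)`. -/
def cnt {A : Type*} (σ : ℕ → A) (a : A) (lo hi : ℕ) : ℕ := by
  classical
  exact ((Finset.Ico lo hi).filter fun t => σ t = a).card

/-- The set of runs (as lists of states) of an automaton on a word. -/
def RunsOn {Q A : Type*} [Inhabited Q] (T : Q → A → Q → Prop) (q0 : Q)
    (w : List A) : Set (List Q) :=
  {l : List Q | l.length = w.length + 1 ∧ l.getD 0 default = q0 ∧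
    ∀ i, ∀ h : i < w.length, T (l.getD i default) (w.get ⟨i, h⟩) (l.getD (i + 1) default)}

end

/-!
A counter-model of a node propagates, by the descending counter-model property, along an infinite
path of counter-models. Along a trace following a tail of that path the sizes `𝒪(τᵢ, mᵢ)` never
increase, and each progressing pair makes them drop strictly. As the ordinals are well-founded, no
such trace progresses infinitely often, contradicting the global soundness condition.
-/

universe u

theorem exists_seq_of_forall_exists {α : Type*} {p : α → Prop} {r : α → α → Prop}
    (h : ∀ a, p a → ∃ b, p b ∧ r a b) {a : α} (ha : p a) :
    ∃ f : ℕ → α, f 0 = a ∧ ∀ n, p (f n) ∧ r (f n) (f (n + 1)) := by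
  choose! next hp hr using h
  have iterate_mem (n : ℕ) : p (next^[n] a) := Function.Iterate.rec p ha hp n
  refine ⟨fun n => next^[n] a, rfl, fun n => ⟨iterate_mem n, ?_⟩⟩
  simpa only [Function.iterate_succ_apply'] using hr _ (iterate_mem n)

theorem exists_forall_ge_eq_zero_of_add_le {α : Type*} [AddMonoid α] [PartialOrder α]
    [CanonicallyOrderedAdd α] [IsLeftCancelAdd α] [WellFoundedLT α] {a d : ℕ → α}
    (h : ∀ i, a (i + 1) + d i ≤ a i) : ∃ n, ∀ i, n ≤ i → d i = 0 := by
  have anti : Antitone a := antitone_nat_of_succ_le fun i => le_self_add.trans (h i)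
  obtain ⟨n, stable⟩ := WellFoundedLT.antitone_chain_condition anti
  refine ⟨n, fun i hi => ?_⟩
  have step_eq : a i = a (i + 1) := (stable i hi).symm.trans (stable (i + 1) (by lia))
  exact add_eq_left.mp (((h i).trans_eq step_eq).antisymm le_self_add)

/-- A proof graph reduced to the data of the descent argument: the premise relation, which models
refute the sequent of which node, the trace pair function `δ₁` on left-hand trace values, and the
ordinal trace function `𝒪` (here `size`). The graph may be infinite; as in `PreProof` and `OTF`, the
partial functions are `Option`-valued. -/
structure TracedGraph (Node M T : Type*) where
  IsPremise : Node → Node → Prop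
  Refutes : M → Node → Prop
  δ : Node → Node → T → T → Option Ordinal.{u}
  size : T → M → Option Ordinal.{u}
  size_isSome : ∀ {ν ν' τ τ' m}, (δ ν ν' τ τ').isSome → Refutes m ν → (size τ m).isSome

namespace TracedGraph

variable {Node M T : Type*} (G : TracedGraph.{u} Node M T)

/-- An infinite path, from conclusions to premises. -/
def IsPath (νs : ℕ → Node) : Prop :=
  ∀ i, G.IsPremise (νs i) (νs (i + 1))

/-- An infinite sequence of trace values following a path from its first node on. -/
def IsTrace (νs : ℕ → Node) (τs : ℕ → T) : Prop :=
  ∀ i, (G.δ (νs i) (νs (i + 1)) (τs i) (τs (i + 1))).isSome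

/-- A trace with infinitely many progressing pairs. -/
def InfinitelyProgressing (νs : ℕ → Node) (τs : ℕ → T) : Prop :=
  ∀ N, ∃ i, N ≤ i ∧ ∃ α, G.δ (νs i) (νs (i + 1)) (τs i) (τs (i + 1)) = some α ∧ 0 < α

/-- The global soundness condition: every infinite path has a tail followed by an infinitely
progressing trace. -/
def GlobalSound : Prop :=
  ∀ νs, G.IsPath νs → ∃ (k : ℕ) (τs : ℕ → T),
    G.IsTrace (fun i => νs (k + i)) τs ∧ G.InfinitelyProgressing (fun i => νs (k + i)) τs

/-- Passing from the model `m` at the node `ν` to the model `m'` at the node `ν'` decreases the size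
of every trace value by at least the progress of its trace pair. -/
def Descends (ν : Node) (m : M) (ν' : Node) (m' : M) : Prop :=
  ∀ τ τ' α, G.δ ν ν' τ τ' = some α →
    ∀ o, G.size τ m = some o → ∃ o', G.size τ' m' = some o' ∧ o' + α ≤ o

/-- The descending counter-model property. -/
def DescendingCounterModels : Prop :=
  ∀ ν m, G.Refutes m ν →
    ∃ ν' m', G.IsPremise ν ν' ∧ G.Refutes m' ν' ∧ G.Descends ν m ν' m'

variable {G} {νs : ℕ → Node} {ms : ℕ → M} {τs : ℕ → T}

theorem DescendingCounterModels.exists_isPath (hG : G.DescendingCounterModels) {ν : Node} {m : M}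
    (hm : G.Refutes m ν) :
    ∃ (νs : ℕ → Node) (ms : ℕ → M), νs 0 = ν ∧ ms 0 = m ∧ G.IsPath νs ∧
      (∀ i, G.Refutes (ms i) (νs i)) ∧ ∀ i, G.Descends (νs i) (ms i) (νs (i + 1)) (ms (i + 1)) := by
  have step : ∀ x : Node × M, G.Refutes x.2 x.1 → ∃ y : Node × M,
      G.Refutes y.2 y.1 ∧ G.IsPremise x.1 y.1 ∧ G.Descends x.1 x.2 y.1 y.2 := by
    rintro ⟨ν, m⟩ hm
    obtain ⟨ν', m', premise, refutes, descends⟩ := hG ν m hm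
    exact ⟨(ν', m'), refutes, premise, descends⟩
  obtain ⟨x, start, hx⟩ := exists_seq_of_forall_exists step (a := (ν, m)) hm
  exact ⟨fun i => (x i).1, fun i => (x i).2, congrArg Prod.fst start, congrArg Prod.snd start,
    fun i => (hx i).2.1, fun i => (hx i).1, fun i => (hx i).2.2⟩

theorem IsTrace.exists_add_le (trace : G.IsTrace νs τs) (refutes : ∀ i, G.Refutes (ms i) (νs i))
    (descends : ∀ i, G.Descends (νs i) (ms i) (νs (i + 1)) (ms (i + 1))) :
    ∃ o d : ℕ → Ordinal.{u}, (∀ i, G.δ (νs i) (νs (i + 1)) (τs i) (τs (i + 1)) = some (d i)) ∧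
      ∀ i, o (i + 1) + d i ≤ o i := by
  choose d hd using fun i => Option.isSome_iff_exists.mp (trace i)
  choose o ho using fun i => Option.isSome_iff_exists.mp (G.size_isSome (trace i) (refutes i))
  refine ⟨o, d, hd, fun i => ?_⟩
  obtain ⟨o', ho', hle⟩ := descends i _ _ _ (hd i) _ (ho i)
  rwa [Option.some.inj ((ho (i + 1)).symm.trans ho')]

theorem IsTrace.not_infinitelyProgressing (trace : G.IsTrace νs τs)
    (refutes : ∀ i, G.Refutes (ms i) (νs i))
    (descends : ∀ i, G.Descends (νs i) (ms i) (νs (i + 1)) (ms (i + 1))) :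
    ¬ G.InfinitelyProgressing νs τs := by
  intro progressing
  obtain ⟨o, d, hd, hle⟩ := trace.exists_add_le refutes descends
  obtain ⟨n, eventually_zero⟩ := exists_forall_ge_eq_zero_of_add_le hle
  obtain ⟨i, hi, α, hα, α_pos⟩ := progressing n
  have α_eq : α = d i := Option.some.inj (hα.symm.trans (hd i))
  exact α_pos.ne' (α_eq.trans (eventually_zero i hi))

end TracedGraph

theorem soundness_of_cyclic_proof_systems_general {Node M T : Type*} {G : TracedGraph.{u} Node M T}
    (descending : G.DescendingCounterModels) (sound : G.GlobalSound) (ν : Node) (m : M) :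
    ¬ G.Refutes m ν := by
  intro hm
  obtain ⟨νs, ms, -, -, path, refutes, descends⟩ := descending.exists_isPath hm
  obtain ⟨k, τs, trace, progressing⟩ := sound νs path
  exact trace.not_infinitelyProgressing (fun i => refutes (k + i)) (fun i => descends (k + i))
    progressing

namespace PreProof

variable {S : CES}

/-- The left-hand trace structure of a pre-proof together with the models refuting its sequents. -/
def tracedGraph (P : PreProof S) (O : OTF S) : TracedGraph P.Node S.M S.TA where
  IsPremise ν ν' := ν' ∈ P.children ν
  Refutes m ν := S.satA m (P.seqOf ν).1 ∧ ¬ S.satC m (P.seqOf ν).2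
  δ := P.δ1
  size := O.OA
  size_isSome hδ hm := O.definedA _ _ _ (P.δ1_dom _ _ _ _ hδ).2.1 hm.1

theorem DCM.tracedGraph_descendingCounterModels {P : PreProof S} {O : OTF S} (h : P.DCM O) :
    (P.tracedGraph O).DescendingCounterModels := by
  rintro ν m ⟨hA, hC⟩
  obtain ⟨ν', premise, m', hA', hC', descends⟩ := h ν m hA hC
  exact ⟨ν', m', premise, ⟨hA', hC'⟩, descends⟩

end PreProof

/-- **Soundness of Cyclic Proof Systems.**
Given a cyclic entailment system with an ordinal trace function satisfying the
descending counter-model property, if `P` is a valid cyclic proof (every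
infinite path has a tail followed by an infinitely progressing left-hand
trace) of the sequent `Sq` (i.e. `Sq` labels a node `root` of `P`), then `Sq`
is valid. -/
theorem soundness_of_cyclic_proof_systems
    (S : CES) (P : PreProof S) (O : OTF S)
    (hdcm : P.DCM O) (hglobal : P.GlobalSound)
    (root : P.Node) (Sq : S.A × S.C) (hroot : P.seqOf root = Sq) :
    S.Valid Sq := by
  subst hroot
  exact fun m hA => not_not.mp fun hC => soundness_of_cyclic_proof_systems_general
    hdcm.tracedGraph_descendingCounterModels hglobal root m ⟨hA, hC⟩
end

section
/- Soundness and Completeness of the Automata Construction: Let P be a cyclic proof, ν a node of P, τ_𝒜 ∈ TraceVals_𝒜(ν) and τ_𝒞 ∈ TraceVals_𝒞(ν), and ∼ ∈ {<, ≤}. Then τ_𝒞 ∼^ν_P τ_𝒜 holds if and only if L_{ℬ^{(P,ν)}_{(τ_𝒜,τ_𝒞)}} ∼ L_{𝒜^{(P,ν)}_{(τ_𝒜,τ_𝒞)}} and the automaton ℬ^{(P,ν)}_{(τ_𝒜,τ_𝒞)} is grounded. -/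
/-!
A trace along a path and a run over a word are the same kind of object: a trace is a run over the
sequence of edges of the path, and its size is the value of that run. Reading a word of nodes,
`ℬ` does nothing but guess a right-hand trace along them, while `𝒜` guesses a left-hand trace and
may abandon it at any point for `⊤`, at no further weight. A letter `(T_μ(τ), τ)` at the end of the
word tells `𝒜` which right-hand trace value it is compared with, and forces its left-hand trace to
have the full length and to end in a value equated with `τ`.

Only finitely many values are accepted on a given word, so the suprema defining the two languages
are attained, and `L_ℬ ∼ L_𝒜` says that each accepting run of `ℬ` is bounded by one of `𝒜` over the
same word. On words of nodes this is the comparison demanded by the trace value ordering of grounded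
traces; on words with a final letter `(T_μ(τ), τ)` it is the one demanded of partially maximal
traces that are not grounded. Groundedness of `ℬ` says that no other positive maximal traces exist.
-/

/-- The comparison `∼ ∈ {<, ≤}` of ordinals: `<` if `strict`, and `≤` otherwise. -/
def LTOrLE (strict : Bool) (a b : Ordl) : Prop :=
  if strict then a < b else a ≤ b

theorem LTOrLE.trans_le {strict : Bool} {a b c : Ordl} (hab : LTOrLE strict a b) (hbc : b ≤ c) :
    LTOrLE strict a c := by
  cases strict
  exacts [le_trans (b := b) hab hbc, lt_of_lt_of_le (b := b) hab hbc]

theorem LTOrLE.of_le {strict : Bool} {a b c : Ordl} (hab : a ≤ b) (hbc : LTOrLE strict b c) :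
    LTOrLE strict a c := by
  cases strict
  exacts [le_trans (b := b) hab hbc, lt_of_le_of_lt (b := b) hab hbc]

theorem optOrd_iff {strict : Bool} {x y : Option Ordl} :
    OptOrd strict x y ↔ ∀ a, x = some a → ∃ b, y = some b ∧ LTOrLE strict a b := by
  cases strict <;> cases x <;> cases y <;> simp [OptOrd, OptLT, OptLE, LTOrLE]

theorem revSum_congr {d e : ℕ → Ordl} {n : ℕ} (h : ∀ i < n, d i = e i) :
    revSum d n = revSum e n := by
  induction n with
  | zero => rfl
  | succ n ih =>
    rw [revSum, revSum, h n n.lt_succ_self, ih fun i hi => h i (hi.trans n.lt_succ_self)]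

section Runs

variable {Q A : Type*} {T : Q → A → Q → Prop} {q₀ : Q} {F : Q → Prop} {wt : Q → A → Q → Ordl}
  {m : ℕ} {w : ℕ → A}

/-- Some run over the first `m` letters of `w` ends in the state `s` and has value `v`. -/
def EndsAt (T : Q → A → Q → Prop) (q₀ : Q) (wt : Q → A → Q → Ordl) (m : ℕ) (w : ℕ → A)
    (s : Q) (v : Ordl) : Prop :=
  ∃ q, IsRun T q₀ m w q ∧ q m = s ∧ runVal wt m w q = v

theorem endsAt_zero {s : Q} {v : Ordl} : EndsAt T q₀ wt 0 w s v ↔ s = q₀ ∧ v = 0 := by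
  constructor
  · rintro ⟨q, ⟨rfl, -⟩, rfl, rfl⟩
    exact ⟨rfl, rfl⟩
  · rintro ⟨rfl, rfl⟩
    exact ⟨fun _ => s, ⟨rfl, fun i hi => absurd hi i.not_lt_zero⟩, rfl, rfl⟩

theorem endsAt_succ {s' : Q} {v' : Ordl} :
    EndsAt T q₀ wt (m + 1) w s' v' ↔
      ∃ s v, EndsAt T q₀ wt m w s v ∧ T s (w m) s' ∧ wt s (w m) s' + v = v' := by
  constructor
  · rintro ⟨q, ⟨hq₀, hq⟩, rfl, rfl⟩
    exact ⟨q m, runVal wt m w q, ⟨q, ⟨hq₀, fun i hi => hq i (hi.trans m.lt_succ_self)⟩, rfl, rfl⟩,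
      hq m m.lt_succ_self, rfl⟩
  · rintro ⟨_, _, ⟨q, ⟨hq₀, hq⟩, rfl, rfl⟩, hT, rfl⟩
    have hold : ∀ i ≤ m, Function.update q (m + 1) s' i = q i := fun i hi =>
      Function.update_of_ne (by lia) ..
    have hnew : Function.update q (m + 1) s' (m + 1) = s' := Function.update_self ..
    refine ⟨Function.update q (m + 1) s', ⟨(hold 0 m.zero_le).trans hq₀, fun i hi => ?_⟩, hnew, ?_⟩
    · rcases Nat.lt_succ_iff_lt_or_eq.1 hi with hi | rfl
      · rw [hold i hi.le, hold (i + 1) hi]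
        exact hq i hi
      · rwa [hold i le_rfl, hnew]
    · rw [runVal, revSum, hold m le_rfl, hnew]
      exact congrArg _ (revSum_congr fun i hi => by rw [hold i hi.le, hold (i + 1) hi])

theorem endsAt_one {s : Q} {v : Ordl} :
    EndsAt T q₀ wt 1 w s v ↔ T q₀ (w 0) s ∧ wt q₀ (w 0) s = v := by
  simp [endsAt_succ, endsAt_zero]

theorem finite_endsAt (hT : ∀ q a, {q' | T q a q'}.Finite) :
    {p : Q × Ordl | EndsAt T q₀ wt m w p.1 p.2}.Finite := by
  induction m with
  | zero =>
    exact (Set.finite_singleton (q₀, 0)).subset fun p hp => Prod.ext_iff.2 (endsAt_zero.1 hp)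
  | succ m ih =>
    refine (ih.biUnion fun p _ => (hT p.1 (w m)).image
      fun s' => (s', wt p.1 (w m) s' + p.2)).subset ?_
    rintro ⟨s', v'⟩ (hs' : EndsAt T q₀ wt (m + 1) w s' v')
    obtain ⟨s, v, hs, hstep, rfl⟩ := endsAt_succ.1 hs'
    exact Set.mem_biUnion (x := (s, v)) hs ⟨s', hstep, rfl⟩

/-- The values of the accepting runs over the first `m` letters of `w`; its supremum is the value
of the quantitative language `Lang` at this word. -/
def acceptedVals (T : Q → A → Q → Prop) (q₀ : Q) (F : Q → Prop) (wt : Q → A → Q → Ordl) (m : ℕ)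
    (w : ℕ → A) : Set Ordl :=
  {v | ∃ s, F s ∧ EndsAt T q₀ wt m w s v}

theorem finite_acceptedVals (hT : ∀ q a, {q' | T q a q'}.Finite) :
    (acceptedVals T q₀ F wt m w).Finite := by
  have hends : {p : Q × Ordl | EndsAt T q₀ wt m w p.1 p.2}.Finite := finite_endsAt hT
  refine (hends.image Prod.snd).subset ?_
  rintro v ⟨s, -, hs⟩
  exact ⟨(s, v), hs, rfl⟩

open Classical in
theorem lang_eq_ite : Lang T q₀ F wt m w =
    if (acceptedVals T q₀ F wt m w).Nonempty then some (sSup (acceptedVals T q₀ F wt m w))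
      else none := by
  have hvals : acceptedVals T q₀ F wt m w =
      {v | ∃ q, IsRun T q₀ m w q ∧ F (q m) ∧ v = runVal wt m w q} := by
    ext v
    constructor
    · rintro ⟨_, hF, q, hq, rfl, rfl⟩
      exact ⟨q, hq, hF, rfl⟩
    · rintro ⟨q, hq, hF, rfl⟩
      exact ⟨q m, hF, q, hq, rfl, rfl⟩
  have hne : (acceptedVals T q₀ F wt m w).Nonempty ↔ ∃ q, IsRun T q₀ m w q ∧ F (q m) := by
    rw [hvals]
    exact ⟨fun ⟨_, q, hq, hF, _⟩ => ⟨q, hq, hF⟩, fun ⟨q, hq, hF⟩ => ⟨_, q, hq, hF, rfl⟩⟩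
  simp only [Lang, hne]
  rw [hvals]

theorem lang_eq_some_iff (hT : ∀ q a, {q' | T q a q'}.Finite) {v : Ordl} :
    Lang T q₀ F wt m w = some v ↔ IsGreatest (acceptedVals T q₀ F wt m w) v := by
  rw [lang_eq_ite]
  split_ifs with hne
  · have hmax : IsGreatest (acceptedVals T q₀ F wt m w) (sSup (acceptedVals T q₀ F wt m w)) :=
      ⟨hne.csSup_mem (finite_acceptedVals hT), fun _ => le_csSup (finite_acceptedVals hT).bddAbove⟩
    rw [Option.some_inj]
    exact ⟨fun h => h ▸ hmax, hmax.unique⟩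
  · exact iff_of_false nofun fun h => hne h.nonempty

theorem exists_isGreatest_acceptedVals (hT : ∀ q a, {q' | T q a q'}.Finite) {v : Ordl}
    (hv : v ∈ acceptedVals T q₀ F wt m w) : ∃ a, IsGreatest (acceptedVals T q₀ F wt m w) a :=
  (finite_acceptedVals hT).exists_maximal ⟨v, hv⟩ |>.imp fun _ => maximal_iff_isGreatest.1

theorem optOrd_lang_iff {Q' : Type*} {T' : Q' → A → Q' → Prop} {q₀' : Q'} {F' : Q' → Prop}
    {wt' : Q' → A → Q' → Ordl} (hT : ∀ q a, {q' | T q a q'}.Finite)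
    (hT' : ∀ q a, {q' | T' q a q'}.Finite) {strict : Bool} :
    OptOrd strict (Lang T q₀ F wt m w) (Lang T' q₀' F' wt' m w) ↔
      ∀ v ∈ acceptedVals T q₀ F wt m w, ∃ v' ∈ acceptedVals T' q₀' F' wt' m w,
        LTOrLE strict v v' := by
  simp only [optOrd_iff, lang_eq_some_iff hT, lang_eq_some_iff hT']
  constructor
  · intro h v hv
    obtain ⟨a, ha⟩ := exists_isGreatest_acceptedVals hT hv
    obtain ⟨b, hb, hab⟩ := h a ha
    exact ⟨b, hb.1, hab.of_le (ha.2 hv)⟩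
  · intro h a ha
    obtain ⟨v', hv', hav'⟩ := h a ha.1
    obtain ⟨b, hb⟩ := exists_isGreatest_acceptedVals hT' hv'
    exact ⟨b, hb, hav'.trans_le (hb.2 hv')⟩

end Runs

section Traces

/-- A trace of `n` steps along the path `νs`, from `τ` to `σ` and of size `v`, for the trace pair
function `δ`: a run over the edges of `νs` whose states are trace values. -/
def TraceTo {N X : Type*} (δ : N → N → X → X → Option Ordl) (νs : ℕ → N) (τ : X) (n : ℕ) (σ : X)
    (v : Ordl) : Prop :=
  EndsAt (fun σ (e : N × N) σ' => (δ e.1 e.2 σ σ').isSome) τ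
    (fun σ e σ' => (δ e.1 e.2 σ σ').getD 0) n (fun i => (νs i, νs (i + 1))) σ v

theorem traceTo_zero {N X : Type*} {δ : N → N → X → X → Option Ordl} {νs : ℕ → N} {τ σ : X}
    {v : Ordl} : TraceTo δ νs τ 0 σ v ↔ σ = τ ∧ v = 0 :=
  endsAt_zero

theorem traceTo_succ {N X : Type*} {δ : N → N → X → X → Option Ordl} {νs : ℕ → N} {τ σ' : X}
    {n : ℕ} {v' : Ordl} :
    TraceTo δ νs τ (n + 1) σ' v' ↔ ∃ σ v, TraceTo δ νs τ n σ v ∧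
      (δ (νs n) (νs (n + 1)) σ σ').isSome ∧ (δ (νs n) (νs (n + 1)) σ σ').getD 0 + v = v' :=
  endsAt_succ

variable {S : CES} {P : PreProof S} {O : OTF S} {Excl : P.Node → S.TC → Prop} {ν : P.Node}
  {τA : S.TA} {τC : S.TC} {n N : ℕ} {νs : ℕ → P.Node} {v : Ordl}

theorem TraceTo.isPath {σ : S.TC} (h : TraceTo P.δ2 νs τC n σ v) : P.IsPath (n + 1) νs := by
  obtain ⟨τs, ⟨-, hstep⟩, -⟩ := h
  exact fun i hi => (P.δ2_dom _ _ _ _ (hstep i (Nat.lt_of_succ_lt_succ hi))).1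

theorem traceTo_δ1_iff (hτA : τA ∈ S.tvA (P.seqOf (νs 0)).1) (hn : n < N) {σ : S.TA} :
    TraceTo P.δ1 νs τA n σ v ↔
      ∃ τs, τs 0 = τA ∧ P.FollowsL N νs (n + 1) τs ∧ τs n = σ ∧ P.thetaL νs τs (n + 1) = v := by
  constructor
  · rintro ⟨τs, ⟨rfl, hstep⟩, hend, hval⟩
    refine ⟨τs, rfl, ⟨hn, fun i hi => ?_, fun i hi => hstep i (Nat.lt_of_succ_lt_succ hi)⟩,
      hend, hval⟩
    cases i with
    | zero => exact hτA
    | succ i => exact (P.δ1_dom _ _ _ _ (hstep i (Nat.lt_of_succ_lt_succ hi))).2.2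
  · rintro ⟨τs, hstart, hτs, hend, hval⟩
    exact ⟨τs, ⟨hstart, fun i hi => hτs.2.2 i (Nat.succ_lt_succ hi)⟩, hend, hval⟩

theorem traceTo_δ2_iff (hτC : τC ∈ S.tvC (P.seqOf (νs 0)).2) (hn : n < N) {σ : S.TC} :
    TraceTo P.δ2 νs τC n σ v ↔
      ∃ τs, τs 0 = τC ∧ P.FollowsR N νs (n + 1) τs ∧ τs n = σ ∧ P.thetaR νs τs (n + 1) = v := by
  constructor
  · rintro ⟨τs, ⟨rfl, hstep⟩, hend, hval⟩
    refine ⟨τs, rfl, ⟨hn, fun i hi => ?_, fun i hi => hstep i (Nat.lt_of_succ_lt_succ hi)⟩,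
      hend, hval⟩
    cases i with
    | zero => exact hτC
    | succ i => exact (P.δ2_dom _ _ _ _ (hstep i (Nat.lt_of_succ_lt_succ hi))).2.2
  · rintro ⟨τs, hstart, hτs, hend, hval⟩
    exact ⟨τs, ⟨hstart, fun i hi => hτs.2.2 i (Nat.succ_lt_succ hi)⟩, hend, hval⟩

theorem TraceTo.mem_tvC {σ : S.TC} (h : TraceTo P.δ2 νs τC n σ v)
    (hτC : τC ∈ S.tvC (P.seqOf (νs 0)).2) : σ ∈ S.tvC (P.seqOf (νs n)).2 := by
  obtain ⟨τs, -, hτs, rfl, -⟩ := (traceTo_δ2_iff hτC n.lt_succ_self).1 h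
  exact hτs.2.1 n n.lt_succ_self

theorem TraceTo.mem_tvA {σ : S.TA} (h : TraceTo P.δ1 νs τA n σ v)
    (hτA : τA ∈ S.tvA (P.seqOf (νs 0)).1) : σ ∈ S.tvA (P.seqOf (νs n)).1 := by
  obtain ⟨τs, -, hτs, rfl, -⟩ := (traceTo_δ1_iff hτA n.lt_succ_self).1 h
  exact hτs.2.1 n n.lt_succ_self

theorem tvo_iff_traceTo (hτA : τA ∈ S.tvA (P.seqOf ν).1) (hτC : τC ∈ S.tvC (P.seqOf ν).2)
    {strict : Bool} :
    P.TVO O Excl strict ν τA τC ↔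
      ∀ n νs σ v, νs 0 = ν → TraceTo P.δ2 νs τC n σ v → P.TerminalR (νs n) σ → ¬ Excl (νs n) σ →
        ∃ k ≤ n, ∃ σ' v', TraceTo P.δ1 νs τA k σ' v' ∧ LTOrLE strict v v' ∧
          (P.Ground O (νs n) σ ∨
            P.Axiomatic (νs n) ∧ k = n ∧ O.Equates (P.seqOf (νs n)) σ' σ) := by
  constructor
  · rintro h n νs σ v rfl htrace hterm hpos
    obtain ⟨τs, hstart, hτs, rfl, rfl⟩ := (traceTo_δ2_iff hτC n.lt_succ_self).1 htrace
    obtain ⟨k, τs', hk, hkn, hstart', hτs', hle, hend⟩ :=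
      h (n + 1) νs τs n.succ_pos htrace.isPath rfl hstart hτs hterm hpos
    obtain ⟨k, rfl⟩ := Nat.exists_eq_add_of_le' hk
    refine ⟨k, Nat.le_of_succ_le_succ hkn, τs' k, _,
      (traceTo_δ1_iff hτA hkn).2 ⟨τs', hstart', hτs', rfl, rfl⟩, hle,
      hend.imp_right fun ⟨hax, hlen, heq⟩ => ?_⟩
    obtain rfl := Nat.succ_injective hlen
    exact ⟨hax, rfl, heq⟩
  · rintro h n νs τs hn - rfl hstart hτs hterm hpos
    obtain ⟨n, rfl⟩ := Nat.exists_eq_add_of_le' hn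
    obtain ⟨k, hkn, _, _, htrace', hle, hend⟩ := h n νs (τs n) _ rfl
      ((traceTo_δ2_iff hτC n.lt_succ_self).2 ⟨τs, hstart, hτs, rfl, rfl⟩) hterm hpos
    obtain ⟨τs', hstart', hτs', rfl, rfl⟩ := (traceTo_δ1_iff hτA (Nat.lt_succ_of_le hkn)).1 htrace'
    refine ⟨k + 1, τs', k.succ_pos, Nat.succ_le_succ hkn, hstart', hτs', hle,
      hend.imp_right fun ⟨hax, hlen, heq⟩ => ?_⟩
    subst hlen
    exact ⟨hax, rfl, heq⟩

end Traces

section Automata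

variable {S : CES} {P : PreProof S} {O : OTF S} {Excl : P.Node → S.TC → Prop} {ν μ : P.Node}
  {τA : S.TA} {τC : S.TC} {m n : ℕ} {νs : ℕ → P.Node} {w : ℕ → Sig P} {v : Ordl}

theorem finite_setOf_aTrans (q : AState P.Node S.TA) (a : Sig P) :
    {q' | ATrans P O ν τA q a q'}.Finite := by
  refine (((Set.toFinite {.pair ν τA, .bot, .top}).union <| Set.finite_iUnion fun μ =>
    (S.tvA (P.seqOf μ).1).finite_toSet.image (AState.pair μ))).subset fun q' hq' => ?_
  cases hq' with
  | step _ hδ => exact .inr (Set.mem_iUnion.2 ⟨_, _, (P.δ1_dom _ _ _ _ hδ).2.2, rfl⟩)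
  | _ => simp

theorem finite_setOf_bTrans (q : BState P.Node S.TC) (a : Sig P) :
    {q' | BTrans P O Excl ν τC q a q'}.Finite := by
  refine (((Set.toFinite {.pair ν τC, .bot}).union <| Set.finite_iUnion fun μ =>
    (S.tvC (P.seqOf μ).2).finite_toSet.image (BState.pair μ))).subset fun q' hq' => ?_
  cases hq' with
  | step _ hδ => exact .inr (Set.mem_iUnion.2 ⟨_, _, (P.δ2_dom _ _ _ _ hδ).2.2, rfl⟩)
  | _ => simp

theorem aTrans_init_inl_iff {s : AState P.Node S.TA} :
    ATrans P O ν τA .init (.inl μ) s ↔ μ = ν ∧ s = .pair μ τA := by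
  constructor
  · rintro ⟨⟩
    exact ⟨rfl, rfl⟩
  · rintro ⟨rfl, rfl⟩
    exact .start

theorem aTrans_pair_inl_iff {μ' : P.Node} {σ : S.TA} {s : AState P.Node S.TA} :
    ATrans P O ν τA (.pair μ σ) (.inl μ') s ↔
      (∃ σ', (P.δ1 μ μ' σ σ').isSome ∧ s = .pair μ' σ') ∨ μ' ∈ P.children μ ∧ s = .top := by
  constructor
  · rintro (_ | ⟨_, hδ⟩ | _ | hμ')
    exacts [.inl ⟨_, hδ, rfl⟩, .inr ⟨hμ', rfl⟩]
  · rintro (⟨σ', hδ, rfl⟩ | ⟨hμ', rfl⟩)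
    exacts [.step (P.δ1_dom _ _ _ _ hδ).1 hδ, .toTop hμ']

theorem aTrans_top_inl_iff {s : AState P.Node S.TA} :
    ATrans P O ν τA .top (.inl μ) s ↔ s = .top := by
  constructor
  · rintro ⟨⟩
    rfl
  · rintro rfl
    exact .topLoop μ

theorem aTrans_pair_inr_tset_iff {σ : S.TA} {σ' : S.TC} {s : AState P.Node S.TA} :
    ATrans P O ν τA (.pair μ σ) (.inr (P.Tset O μ σ', σ')) s ↔
      P.Axiomatic μ ∧ σ' ∈ S.tvC (P.seqOf μ).2 ∧ σ ∈ P.Tset O μ σ' ∧ s = .bot := by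
  constructor
  · generalize hletter : (P.Tset O μ σ', σ') = letter
    rintro (_ | _ | ⟨hax, hσ', hσ⟩)
    obtain ⟨-, rfl⟩ := Prod.ext_iff.1 hletter
    exact ⟨hax, hσ', hσ, rfl⟩
  · rintro ⟨hax, hσ', hσ, rfl⟩
    exact .toBot hax hσ' hσ

theorem bTrans_init_inl_iff {s : BState P.Node S.TC} :
    BTrans P O Excl ν τC .init (.inl μ) s ↔ μ = ν ∧ s = .pair μ τC := by
  constructor
  · rintro ⟨⟩
    exact ⟨rfl, rfl⟩
  · rintro ⟨rfl, rfl⟩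
    exact .start

theorem bTrans_pair_inl_iff {μ' : P.Node} {σ : S.TC} {s : BState P.Node S.TC} :
    BTrans P O Excl ν τC (.pair μ σ) (.inl μ') s ↔
      ∃ σ', (P.δ2 μ μ' σ σ').isSome ∧ s = .pair μ' σ' := by
  constructor
  · rintro (_ | ⟨_, hδ⟩)
    exact ⟨_, hδ, rfl⟩
  · rintro ⟨σ', hδ, rfl⟩
    exact .step (P.δ2_dom _ _ _ _ hδ).1 hδ

/-- The first `n + 1` letters of the word `w` are the nodes `νs 0, …, νs n`. -/
def Spells (w : ℕ → Sig P) (νs : ℕ → P.Node) (n : ℕ) : Prop :=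
  ∀ i ≤ n, w i = .inl (νs i)

theorem Spells.of_succ (h : Spells w νs (n + 1)) : Spells w νs n :=
  fun i hi => h i (hi.trans n.le_succ)

theorem Spells.endsAt_aTrans_iff (hw : Spells w νs n) (hpath : P.IsPath (n + 1) νs)
    {s : AState P.Node S.TA} :
    EndsAt (ATrans P O ν τA) .init (Awt P) (n + 1) w s v ↔ νs 0 = ν ∧
      ((∃ σ, TraceTo P.δ1 νs τA n σ v ∧ s = .pair (νs n) σ) ∨
        (∃ k < n, ∃ σ, TraceTo P.δ1 νs τA k σ v) ∧ s = .top) := by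
  induction n generalizing s v with
  | zero =>
    rw [endsAt_one, hw 0 le_rfl, aTrans_init_inl_iff]
    constructor
    · rintro ⟨⟨hν, rfl⟩, rfl⟩
      exact ⟨hν, .inl ⟨τA, traceTo_zero.2 ⟨rfl, rfl⟩, rfl⟩⟩
    · rintro ⟨hν, ⟨σ, hσ, rfl⟩ | ⟨⟨k, hk, -⟩, -⟩⟩
      · obtain ⟨rfl, rfl⟩ := traceTo_zero.1 hσ
        exact ⟨⟨hν, rfl⟩, rfl⟩
      · exact absurd hk k.not_lt_zero
  | succ n ih =>
    have hprev : P.IsPath (n + 1) νs := fun i hi => hpath i (hi.trans (n + 1).lt_succ_self)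
    simp only [endsAt_succ (m := n + 1), ih hw.of_succ hprev, hw (n + 1) le_rfl]
    constructor
    · rintro ⟨_, v, ⟨hν, ⟨σ, hσ, rfl⟩ | ⟨⟨k, hk, σ, hσ⟩, rfl⟩⟩, hstep, rfl⟩
      · obtain ⟨σ', hδ, rfl⟩ | ⟨-, rfl⟩ := aTrans_pair_inl_iff.1 hstep
        · exact ⟨hν, .inl ⟨σ', traceTo_succ.2 ⟨σ, v, hσ, hδ, rfl⟩, rfl⟩⟩
        · exact ⟨hν, .inr ⟨⟨n, n.lt_succ_self, σ, (zero_add v).symm ▸ hσ⟩, rfl⟩⟩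
      · obtain rfl := aTrans_top_inl_iff.1 hstep
        exact ⟨hν, .inr ⟨⟨k, hk.trans n.lt_succ_self, σ, (zero_add v).symm ▸ hσ⟩, rfl⟩⟩
    · rintro ⟨hν, ⟨σ', hσ', rfl⟩ | ⟨⟨k, hk, σ, hσ⟩, rfl⟩⟩
      · obtain ⟨σ, v, hσ, hδ, rfl⟩ := traceTo_succ.1 hσ'
        exact ⟨_, v, ⟨hν, .inl ⟨σ, hσ, rfl⟩⟩, aTrans_pair_inl_iff.2 (.inl ⟨σ', hδ, rfl⟩), rfl⟩
      · obtain hk | rfl := Nat.lt_succ_iff_lt_or_eq.1 hk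
        · exact ⟨.top, v, ⟨hν, .inr ⟨⟨k, hk, σ, hσ⟩, rfl⟩⟩, .topLoop _, zero_add v⟩
        · exact ⟨_, v, ⟨hν, .inl ⟨σ, hσ, rfl⟩⟩, .toTop (hpath k (by lia)), zero_add v⟩

theorem Spells.endsAt_bTrans_iff (hw : Spells w νs n) {s : BState P.Node S.TC} :
    EndsAt (BTrans P O Excl ν τC) .init (Bwt P) (n + 1) w s v ↔
      νs 0 = ν ∧ ∃ σ, TraceTo P.δ2 νs τC n σ v ∧ s = .pair (νs n) σ := by
  induction n generalizing s v with
  | zero =>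
    rw [endsAt_one, hw 0 le_rfl, bTrans_init_inl_iff]
    constructor
    · rintro ⟨⟨hν, rfl⟩, rfl⟩
      exact ⟨hν, τC, traceTo_zero.2 ⟨rfl, rfl⟩, rfl⟩
    · rintro ⟨hν, σ, hσ, rfl⟩
      obtain ⟨rfl, rfl⟩ := traceTo_zero.1 hσ
      exact ⟨⟨hν, rfl⟩, rfl⟩
  | succ n ih =>
    simp only [endsAt_succ (m := n + 1), ih hw.of_succ, hw (n + 1) le_rfl]
    constructor
    · rintro ⟨_, v, ⟨hν, σ, hσ, rfl⟩, hstep, rfl⟩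
      obtain ⟨σ', hδ, rfl⟩ := bTrans_pair_inl_iff.1 hstep
      exact ⟨hν, σ', traceTo_succ.2 ⟨σ, v, hσ, hδ, rfl⟩, rfl⟩
    · rintro ⟨hν, σ', hσ', rfl⟩
      obtain ⟨σ, v, hσ, hδ, rfl⟩ := traceTo_succ.1 hσ'
      exact ⟨_, v, ⟨hν, σ, hσ, rfl⟩, bTrans_pair_inl_iff.2 ⟨σ', hδ, rfl⟩, rfl⟩

theorem mem_acceptedVals_aTrans_iff (hw : Spells w νs n) (hpath : P.IsPath (n + 1) νs) :
    v ∈ acceptedVals (ATrans P O ν τA) .init AFinal (Awt P) (n + 1) w ↔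
      νs 0 = ν ∧ ∃ k ≤ n, ∃ σ, TraceTo P.δ1 νs τA k σ v := by
  simp only [acceptedVals, Set.mem_ofPred_eq, hw.endsAt_aTrans_iff hpath]
  constructor
  · rintro ⟨_, -, hν, ⟨σ, hσ, -⟩ | ⟨⟨k, hk, hσ⟩, -⟩⟩
    exacts [⟨hν, n, le_rfl, σ, hσ⟩, ⟨hν, k, hk.le, hσ⟩]
  · rintro ⟨hν, k, hk, σ, hσ⟩
    obtain hk | rfl := hk.lt_or_eq
    exacts [⟨.top, nofun, hν, .inr ⟨⟨k, hk, σ, hσ⟩, rfl⟩⟩,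
      ⟨.pair (νs k) σ, nofun, hν, .inl ⟨σ, hσ, rfl⟩⟩]

theorem mem_acceptedVals_aTrans_tset_iff (hw : Spells w νs n) (hpath : P.IsPath (n + 1) νs)
    {σ : S.TC} (hlast : w (n + 1) = .inr (P.Tset O (νs n) σ, σ)) :
    v ∈ acceptedVals (ATrans P O ν τA) .init AFinal (Awt P) (n + 2) w ↔
      νs 0 = ν ∧ P.Axiomatic (νs n) ∧ σ ∈ S.tvC (P.seqOf (νs n)).2 ∧
        ∃ σ' ∈ P.Tset O (νs n) σ, TraceTo P.δ1 νs τA n σ' v := by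
  simp only [acceptedVals, Set.mem_ofPred_eq, endsAt_succ (m := n + 1), hw.endsAt_aTrans_iff hpath,
    hlast]
  constructor
  · rintro ⟨s, -, _, v, ⟨hν, ⟨σ', hσ', rfl⟩ | ⟨-, rfl⟩⟩, hstep, rfl⟩
    · obtain ⟨hax, hσ, hmem, rfl⟩ := aTrans_pair_inr_tset_iff.1 hstep
      exact ⟨hν, hax, hσ, σ', hmem, (zero_add v).symm ▸ hσ'⟩
    · nomatch hstep
  · rintro ⟨hν, hax, hσ, σ', hmem, hσ'⟩
    exact ⟨.bot, nofun, _, v, ⟨hν, .inl ⟨σ', hσ', rfl⟩⟩, .toBot hax hσ hmem, zero_add v⟩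

theorem BTrans.eq_inl_of_pair {s : BState P.Node S.TC} {a : Sig P} {σ : S.TC}
    (h : BTrans P O Excl ν τC s a (.pair μ σ)) :
    a = .inl μ ∧ (s = .init ∨ ∃ μ' σ', s = .pair μ' σ') := by
  cases h with
  | start => exact ⟨rfl, .inl rfl⟩
  | step => exact ⟨rfl, .inr ⟨_, _, rfl⟩⟩

theorem bTrans_bot_iff {s : BState P.Node S.TC} {a : Sig P} :
    BTrans P O Excl ν τC s a .bot ↔ ∃ μ σ, s = .pair μ σ ∧ a = .inr (P.Tset O μ σ, σ) ∧
      P.Axiomatic μ ∧ σ ∈ S.tvC (P.seqOf μ).2 ∧ ¬ P.Ground O μ σ ∧ ¬ Excl μ σ := by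
  constructor
  · rintro (_ | _ | ⟨hax, hσ, hground, hpos⟩)
    exact ⟨_, _, rfl, rfl, hax, hσ, hground, hpos⟩
  · rintro ⟨μ, σ, rfl, rfl, hax, hσ, hground, hpos⟩
    exact .toBot hax hσ hground hpos

theorem not_bTrans_init {s : BState P.Node S.TC} {a : Sig P} :
    ¬ BTrans P O Excl ν τC s a .init :=
  nofun

theorem endsAt_bTrans_init_iff :
    EndsAt (BTrans P O Excl ν τC) .init (Bwt P) m w .init v ↔ m = 0 ∧ v = 0 := by
  cases m with
  | zero => simp [endsAt_zero]
  | succ m =>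
    rw [endsAt_succ]
    exact iff_of_false (fun ⟨_, _, _, hstep, _⟩ => not_bTrans_init hstep) nofun

theorem exists_spells_of_endsAt_bTrans_pair {σ : S.TC}
    (h : EndsAt (BTrans P O Excl ν τC) .init (Bwt P) m w (.pair μ σ) v) :
    ∃ n νs, m = n + 1 ∧ Spells w νs n := by
  have hletters : m ≠ 0 ∧ ∀ i < m, ∃ μ, w i = .inl μ := by
    induction m generalizing μ σ v with
    | zero => exact nomatch (endsAt_zero.1 h).1
    | succ m ih =>
      obtain ⟨s, v, hs, hstep, -⟩ := endsAt_succ.1 h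
      obtain ⟨hm, rfl | ⟨μ', σ', rfl⟩⟩ := hstep.eq_inl_of_pair
      · obtain ⟨rfl, -⟩ := endsAt_bTrans_init_iff.1 hs
        exact ⟨one_ne_zero, fun i hi => ⟨μ, Nat.lt_one_iff.1 hi ▸ hm⟩⟩
      · refine ⟨m.succ_ne_zero, fun i hi => ?_⟩
        obtain hi | rfl := Nat.lt_succ_iff_lt_or_eq.1 hi
        exacts [(ih hs).2 i hi, ⟨μ, hm⟩]
  obtain ⟨n, rfl⟩ := Nat.exists_eq_succ_of_ne_zero hletters.1
  have hnode : ∀ i, ∃ μ, i ≤ n → w i = .inl μ := fun i => by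
    by_cases hi : i ≤ n
    · exact (hletters.2 i (Nat.lt_succ_of_le hi)).imp fun _ hμ _ => hμ
    · exact ⟨ν, fun hi' => absurd hi' hi⟩
  choose νs hνs using hnode
  exact ⟨n, νs, rfl, hνs⟩

theorem endsAt_bTrans_pair_iff {σ : S.TC} :
    EndsAt (BTrans P O Excl ν τC) .init (Bwt P) m w (.pair μ σ) v ↔
      ∃ n νs, m = n + 1 ∧ Spells w νs n ∧ νs 0 = ν ∧ νs n = μ ∧ TraceTo P.δ2 νs τC n σ v := by
  constructor
  · intro h
    obtain ⟨n, νs, rfl, hw⟩ := exists_spells_of_endsAt_bTrans_pair h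
    obtain ⟨hν, σ, hσ, hpair⟩ := hw.endsAt_bTrans_iff.1 h
    obtain ⟨rfl, rfl⟩ := BState.pair.inj hpair
    exact ⟨n, νs, rfl, hw, hν, rfl, hσ⟩
  · rintro ⟨n, νs, rfl, hw, hν, rfl, hσ⟩
    exact hw.endsAt_bTrans_iff.2 ⟨hν, σ, hσ, rfl⟩

theorem mem_acceptedVals_bTrans_iff (hτC : τC ∈ S.tvC (P.seqOf ν).2) :
    v ∈ acceptedVals (BTrans P O Excl ν τC) .init (BFinal P O Excl) (Bwt P) m w ↔
      ∃ n νs σ, Spells w νs n ∧ νs 0 = ν ∧ TraceTo P.δ2 νs τC n σ v ∧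
        (m = n + 1 ∧ BFinal P O Excl (.pair (νs n) σ) ∨
          m = n + 2 ∧ w (n + 1) = .inr (P.Tset O (νs n) σ, σ) ∧ P.Axiomatic (νs n) ∧
            ¬ P.Ground O (νs n) σ ∧ ¬ Excl (νs n) σ) := by
  constructor
  · rintro ⟨_ | ⟨μ, σ⟩ | _, hfinal, h⟩
    · exact hfinal.elim
    · obtain ⟨n, νs, rfl, hw, hν, rfl, hσ⟩ := endsAt_bTrans_pair_iff.1 h
      exact ⟨n, νs, σ, hw, hν, hσ, .inl ⟨rfl, hfinal⟩⟩
    · obtain _ | m := m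
      · nomatch (endsAt_zero.1 h).1
      obtain ⟨_, v, hs, hstep, rfl⟩ := endsAt_succ.1 h
      obtain ⟨μ, σ, rfl, hlast, hax, -, hground, hpos⟩ := bTrans_bot_iff.1 hstep
      obtain ⟨n, νs, rfl, hw, hν, rfl, hσ⟩ := endsAt_bTrans_pair_iff.1 hs
      exact ⟨n, νs, σ, hw, hν, (zero_add v).symm ▸ hσ, .inr ⟨rfl, hlast, hax, hground, hpos⟩⟩
  · rintro ⟨n, νs, σ, hw, rfl, hσ, ⟨rfl, hfinal⟩ | ⟨rfl, hlast, hax, hground, hpos⟩⟩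
    · exact ⟨_, hfinal, endsAt_bTrans_pair_iff.2 ⟨n, νs, rfl, hw, rfl, rfl, hσ⟩⟩
    · exact ⟨.bot, trivial, endsAt_succ.2 ⟨.pair (νs n) σ, v,
        endsAt_bTrans_pair_iff.2 ⟨n, νs, rfl, hw, rfl, rfl, hσ⟩,
        bTrans_bot_iff.2 ⟨_, σ, rfl, hlast, hax, hσ.mem_tvC hτC, hground, hpos⟩, zero_add v⟩⟩

theorem PreProof.Axiomatic.terminalR (h : P.Axiomatic μ) (σ : S.TC) : P.TerminalR μ σ :=
  fun _ hμ' => absurd (h ▸ hμ') List.not_mem_nil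

theorem bFinal_pair_iff {σ : S.TC} :
    BFinal P O Excl (.pair μ σ) ↔
      P.TerminalR μ σ ∧ ¬ Excl μ σ ∧ (P.Axiomatic μ → P.Ground O μ σ) := by
  by_cases hax : P.Axiomatic μ
  · simp [BFinal, hax, hax.terminalR σ]
  · simp [BFinal, hax, and_comm]

theorem bGrounded_iff_traceTo :
    BGrounded P O Excl ν τC ↔
      ∀ n νs σ v, νs 0 = ν → TraceTo P.δ2 νs τC n σ v → BFinal P O Excl (.pair (νs n) σ) →
        P.Ground O (νs n) σ := by
  constructor
  · intro h n νs σ v hν hσ hfinal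
    obtain ⟨q, hq, hend, -⟩ : EndsAt (BTrans P O Excl ν τC) .init (Bwt P) (n + 1)
        (fun i => .inl (νs i)) (.pair (νs n) σ) v :=
      endsAt_bTrans_pair_iff.2 ⟨n, νs, rfl, fun _ _ => rfl, hν, rfl, hσ⟩
    exact h _ _ ⟨n + 1, _, q, hq, hend, hfinal⟩
  · rintro h μ σ ⟨m, w, q, hq, hend, hfinal⟩
    obtain ⟨n, νs, -, -, hν, rfl, hσ⟩ := endsAt_bTrans_pair_iff.1 ⟨q, hq, hend, rfl⟩
    exact h n νs σ _ hν hσ hfinal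

theorem forall_optOrd_lang_iff_traceTo (hτC : τC ∈ S.tvC (P.seqOf ν).2) {strict : Bool} :
    (∀ m w, OptOrd strict (LangB P O Excl ν τC m w) (LangA P O ν τA m w)) ↔
      (∀ n νs σ v, νs 0 = ν → TraceTo P.δ2 νs τC n σ v → BFinal P O Excl (.pair (νs n) σ) →
        ∃ k ≤ n, ∃ σ' v', TraceTo P.δ1 νs τA k σ' v' ∧ LTOrLE strict v v') ∧
      (∀ n νs σ v, νs 0 = ν → TraceTo P.δ2 νs τC n σ v → P.Axiomatic (νs n) →
        ¬ P.Ground O (νs n) σ → ¬ Excl (νs n) σ →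
        ∃ σ' ∈ P.Tset O (νs n) σ, ∃ v', TraceTo P.δ1 νs τA n σ' v' ∧ LTOrLE strict v v') := by
  simp only [LangA, LangB, optOrd_lang_iff finite_setOf_bTrans finite_setOf_aTrans]
  refine ⟨fun h => ⟨fun n νs σ v hν hσ hfinal => ?_, fun n νs σ v hν hσ hax hground hpos => ?_⟩, ?_⟩
  · have hw : Spells (fun i => .inl (νs i)) νs n := fun _ _ => rfl
    obtain ⟨v', hv', hle⟩ := h (n + 1) _ v <|
      (mem_acceptedVals_bTrans_iff hτC).2 ⟨n, νs, σ, hw, hν, hσ, .inl ⟨rfl, hfinal⟩⟩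
    obtain ⟨-, k, hk, σ', hσ'⟩ := (mem_acceptedVals_aTrans_iff hw hσ.isPath).1 hv'
    exact ⟨k, hk, σ', v', hσ', hle⟩
  · let w : ℕ → Sig P :=
      Function.update (fun i => .inl (νs i)) (n + 1) (.inr (P.Tset O (νs n) σ, σ))
    have hw : Spells w νs n := fun i hi => Function.update_of_ne (by lia) ..
    have hlast : w (n + 1) = .inr (P.Tset O (νs n) σ, σ) := Function.update_self ..
    obtain ⟨v', hv', hle⟩ := h (n + 2) w v <| (mem_acceptedVals_bTrans_iff hτC).2
      ⟨n, νs, σ, hw, hν, hσ, .inr ⟨rfl, hlast, hax, hground, hpos⟩⟩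
    obtain ⟨-, -, -, σ', hmem, hσ'⟩ := (mem_acceptedVals_aTrans_tset_iff hw hσ.isPath hlast).1 hv'
    exact ⟨σ', hmem, v', hσ', hle⟩
  · rintro ⟨hnodes, htset⟩ m w v hv
    obtain ⟨n, νs, σ, hw, rfl, hσ, ⟨rfl, hfinal⟩ | ⟨rfl, hlast, hax, hground, hpos⟩⟩ :=
      (mem_acceptedVals_bTrans_iff hτC).1 hv
    · obtain ⟨k, hk, σ', v', hσ', hle⟩ := hnodes n νs σ v rfl hσ hfinal
      exact ⟨v', (mem_acceptedVals_aTrans_iff hw hσ.isPath).2 ⟨rfl, k, hk, σ', hσ'⟩, hle⟩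
    · obtain ⟨σ', hmem, v', hσ', hle⟩ := htset n νs σ v rfl hσ hax hground hpos
      exact ⟨v', (mem_acceptedVals_aTrans_tset_iff hw hσ.isPath hlast).2
        ⟨rfl, hax, hσ.mem_tvC hτC, σ', hmem, hσ'⟩, hle⟩

end Automata

theorem automata_construction_sound_complete_general
    {S : CES} {P : PreProof S} {O : OTF S} {Excl : P.Node → S.TC → Prop}
    (_hExcl : P.ExclOK O Excl) {ν : P.Node} {τA : S.TA} {τC : S.TC}
    (hτA : τA ∈ S.tvA (P.seqOf ν).1) (hτC : τC ∈ S.tvC (P.seqOf ν).2) (strict : Bool) :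
    P.TVO O Excl strict ν τA τC ↔
      (∀ m w, OptOrd strict (LangB P O Excl ν τC m w) (LangA P O ν τA m w)) ∧
        BGrounded P O Excl ν τC := by
  rw [tvo_iff_traceTo hτA hτC, forall_optOrd_lang_iff_traceTo hτC, bGrounded_iff_traceTo]
  constructor
  · refine fun h => ⟨⟨fun n νs σ v hν hσ hfinal => ?_,
      fun n νs σ v hν hσ hax hground hpos => ?_⟩, fun n νs σ v hν hσ hfinal => ?_⟩
    · obtain ⟨hterm, hpos, -⟩ := bFinal_pair_iff.1 hfinal
      obtain ⟨k, hk, σ', v', hσ', hle, -⟩ := h n νs σ v hν hσ hterm hpos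
      exact ⟨k, hk, σ', v', hσ', hle⟩
    · obtain ⟨k, -, σ', v', hσ', hle, hend⟩ := h n νs σ v hν hσ (hax.terminalR σ) hpos
      obtain ⟨-, rfl, heq⟩ := hend.resolve_left hground
      exact ⟨σ', ⟨hσ'.mem_tvA (hν ▸ hτA), heq⟩, v', hσ', hle⟩
    · obtain ⟨hterm, hpos, hground⟩ := bFinal_pair_iff.1 hfinal
      obtain ⟨_, _, _, _, _, _, hend⟩ := h n νs σ v hν hσ hterm hpos
      exact hend.elim id fun hend => hground hend.1
  · rintro ⟨⟨hnodes, htset⟩, hgrounded⟩ n νs σ v hν hσ hterm hpos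
    by_cases hax : P.Axiomatic (νs n) → P.Ground O (νs n) σ
    · have hfinal := bFinal_pair_iff.2 ⟨hterm, hpos, hax⟩
      obtain ⟨k, hk, σ', v', hσ', hle⟩ := hnodes n νs σ v hν hσ hfinal
      exact ⟨k, hk, σ', v', hσ', hle, .inl (hgrounded n νs σ v hν hσ hfinal)⟩
    · obtain ⟨hax, hground⟩ := Classical.not_imp.1 hax
      obtain ⟨σ', hmem, v', hσ', hle⟩ := htset n νs σ v hν hσ hax hground hpos
      exact ⟨n, le_rfl, σ', v', hσ', hle, .inr ⟨hax, rfl, hmem.2⟩⟩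

/-- **Soundness and Completeness of the Automata Construction.**
For a cyclic proof `P`, a node `ν`, trace values `τA ∈ TraceVals_𝒜(ν)`,
`τC ∈ TraceVals_𝒞(ν)` and `∼ ∈ {<, ≤}` (given by `strict`):
`τC ∼^ν_P τA` holds iff `L_ℬ ∼ L_𝒜` and `ℬ^{(P,ν)}_{(τA,τC)}` is grounded. -/
theorem automata_construction_sound_complete
    (S : CES) (P : PreProof S) (O : OTF S)
    (Excl : P.Node → S.TC → Prop) (hExcl : P.ExclOK O Excl)
    (hproof : P.IsCyclicProof)
    (ν : P.Node) (τA : S.TA) (τC : S.TC)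
    (hτA : τA ∈ S.tvA (P.seqOf ν).1) (hτC : τC ∈ S.tvC (P.seqOf ν).2)
    (strict : Bool) :
    P.TVO O Excl strict ν τA τC ↔
      ((∀ (m : ℕ) (w : ℕ → Sig P),
          OptOrd strict (LangB P O Excl ν τC m w) (LangA P O ν τA m w)) ∧
        BGrounded P O Excl ν τC) :=
  automata_construction_sound_complete_general hExcl hτA hτC strict
end
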